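/- arXiv:1308.2656 — 2 statements merged into one kernel-verified Lean document; each statement's English description precedes it below -/
import Mathlib

section
/- Let p ∈ (0,1) and let (f_n)_{n≥1} be any sequence of functions f_n : {0,1}^n → [0,1]. Then (f_n)_{n≥1} is noise sensitive at intensity p if and only if for every r ∈ (p,1), lim_{n→∞} Var_r(E_{p/r}[f_n(ψ·ξ) | ψ]) = 0. -/
/-!
Sample `ψ ∼ ℙ_r` and two independent copies `ξ, ζ ∼ ℙ_{p/r}`. The pair `(ψ·ξ, ψ·ζ)` has
i.i.d. coordinates with both marginals Bernoulli(`p`) and probability `p²/r` of being `(1,1)`.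
The pair `(ω, ω^ε)` is of the same kind, with probability `p(1 - ε + εp)` of `(1,1)`. So the two
laws coincide as soon as `p / r = 1 - ε (1 - p)`, and then `Var_r(E_{p/r}[f(ψ·ξ) | ψ])` is exactly
`noiseCov p ε f` (`Var_condExp_eq_noiseCov`). The relation `p / r = 1 - ε (1 - p)` is a bijection
between `r ∈ (p,1)` and `ε ∈ (0,1)`, which gives the equivalence.
-/

open Finset Filter

namespace PartialObs

/-- Weight of a configuration `ω ∈ {0,1}^n` under the product measure `ℙ_p`. -/
noncomputable def w {n : ℕ} (p : ℝ) (ω : Fin n → Bool) : ℝ :=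
  ∏ i, if ω i then p else 1 - p

/-- Expectation with respect to `ℙ_p`. -/
noncomputable def E {n : ℕ} (p : ℝ) (f : (Fin n → Bool) → ℝ) : ℝ :=
  ∑ ω : Fin n → Bool, w p ω * f ω

/-- Variance with respect to `ℙ_p`. -/
noncomputable def Var {n : ℕ} (p : ℝ) (f : (Fin n → Bool) → ℝ) : ℝ :=
  E p (fun ω => (f ω - E p f) ^ 2)

/-- Coordinatewise product `ψ·ξ` of two configurations. -/
def prodCfg {n : ℕ} (ψ ξ : Fin n → Bool) : Fin n → Bool := fun i => ψ i && ξ i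

/-- The conditional expectation `E_{p/r}[f(ψ·ξ) | ψ]`, as a function of `ψ`:
`ξ` is integrated out according to `ℙ_{p/r}`. -/
noncomputable def condExp {n : ℕ} (p r : ℝ) (f : (Fin n → Bool) → ℝ)
    (ψ : Fin n → Bool) : ℝ :=
  E (p / r) (fun ξ => f (prodCfg ψ ξ))

/-- Joint probability mass of the pair `(ω, ω^ε)` at `(a, b)`, where `ω ∼ ℙ_p` and
`ω^ε` is obtained from `ω` by independently resampling each coordinate with
probability `ε` (the resampled value being `1` with probability `p`). -/
noncomputable def pairW {n : ℕ} (p ε : ℝ) (a b : Fin n → Bool) : ℝ :=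
  ∏ i, (if a i then p else 1 - p) *
    ((1 - ε) * (if a i = b i then 1 else 0) + ε * (if b i then p else 1 - p))

/-- Expectation `E_p[F(ω, ω^ε)]` over the joint law of `(ω, ω^ε)`. -/
noncomputable def E2 {n : ℕ} (p ε : ℝ)
    (F : (Fin n → Bool) → (Fin n → Bool) → ℝ) : ℝ :=
  ∑ a : Fin n → Bool, ∑ b : Fin n → Bool, pairW p ε a b * F a b

/-- The quantity `E_p[f(ω) f(ω^ε)] − E_p[f(ω)]²`. -/
noncomputable def noiseCov {n : ℕ} (p ε : ℝ) (f : (Fin n → Bool) → ℝ) : ℝ :=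
  E2 p ε (fun a b => f a * f b) - (E p f) ^ 2

/-- Noise sensitivity at intensity `p`: for every `ε ∈ (0,1)`,
`E_p[f_n(ω) f_n(ω^ε)] − E_p[f_n(ω)]² → 0` as `n → ∞`. -/
def NS (p : ℝ) (f : ∀ n, (Fin n → Bool) → ℝ) : Prop :=
  ∀ ε ∈ Set.Ioo (0 : ℝ) 1,
    Tendsto (fun n => noiseCov p ε (f n)) atTop (nhds 0)

/-- Transition probability from `ψ` to `a = ψ·ξ` when `ξ ∼ ℙ_q`. -/
noncomputable def thin {n : ℕ} (q : ℝ) (ψ a : Fin n → Bool) : ℝ :=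
  ∏ i, ∑ x : Bool, (if x then q else 1 - q) * (if a i = (ψ i && x) then 1 else 0)

lemma sum_prod_eq_prod_sum {n : ℕ} (g : Fin n → Bool → ℝ) :
    ∑ ω : Fin n → Bool, ∏ i, g i (ω i) = ∏ i, ∑ x : Bool, g i x := by
  rw [Finset.prod_univ_sum, Fintype.piFinset_univ]

lemma E_one {n : ℕ} (r : ℝ) : ∑ ω : Fin n → Bool, w r ω = 1 := by
  unfold w
  rw [sum_prod_eq_prod_sum (fun _ x => if x then r else 1 - r)]
  simp

lemma thin_eq_sum {n : ℕ} (q : ℝ) (ψ a : Fin n → Bool) :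
    thin q ψ a = ∑ ξ : Fin n → Bool, w q ξ * (if a = prodCfg ψ ξ then 1 else 0) := by
  unfold thin
  rw [← sum_prod_eq_prod_sum
    (fun i x => (if x then q else 1 - q) * (if a i = (ψ i && x) then (1 : ℝ) else 0))]
  refine Finset.sum_congr rfl fun ξ _ => ?_
  rw [Finset.prod_mul_distrib, Finset.prod_boole]
  simp [w, prodCfg, funext_iff]

lemma condExp_eq_sum_thin {n : ℕ} (p r : ℝ) (f : (Fin n → Bool) → ℝ) (ψ : Fin n → Bool) :
    condExp p r f ψ = ∑ a, thin (p / r) ψ a * f a := by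
  simp_rw [thin_eq_sum, Finset.sum_mul]
  rw [Finset.sum_comm]
  unfold condExp E
  refine Finset.sum_congr rfl fun ξ _ => ?_
  simp

/-- `ψ·ξ ∼ ℙ_p`. -/
lemma sum_w_thin {n : ℕ} {p r : ℝ} (hr : r ≠ 0) (a : Fin n → Bool) :
    ∑ ψ : Fin n → Bool, w r ψ * thin (p / r) ψ a = w p a := by
  unfold w thin
  simp_rw [← Finset.prod_mul_distrib]
  rw [sum_prod_eq_prod_sum (fun i y => (if y then r else 1 - r) *
    ∑ x : Bool, (if x then p / r else 1 - p / r) * (if a i = (y && x) then 1 else 0))]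
  refine Finset.prod_congr rfl fun i _ => ?_
  cases a i <;> simp <;> field_simp <;> ring

/-- The pairs `(ψ·ξ, ψ·ζ)` and `(ω, ω^ε)` have the same law. -/
lemma sum_w_thin_thin {n : ℕ} {p r ε : ℝ} (hr : r ≠ 0) (h : p = r * (1 - ε * (1 - p)))
    (a b : Fin n → Bool) :
    ∑ ψ : Fin n → Bool, w r ψ * thin (p / r) ψ a * thin (p / r) ψ b = pairW p ε a b := by
  have hq : p / r = 1 - ε * (1 - p) := by rw [div_eq_iff hr]; linarith
  unfold w thin pairW
  simp_rw [← Finset.prod_mul_distrib]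
  rw [sum_prod_eq_prod_sum (fun i y => (if y then r else 1 - r) *
    (∑ x : Bool, (if x then p / r else 1 - p / r) * (if a i = (y && x) then 1 else 0)) *
    (∑ x : Bool, (if x then p / r else 1 - p / r) * (if b i = (y && x) then 1 else 0)))]
  refine Finset.prod_congr rfl fun i _ => ?_
  rw [hq]
  cases a i <;> cases b i <;> simp
  · linear_combination (1 + ε * (1 - p)) * h
  · linear_combination (-ε * (1 - p)) * h
  · exact Or.inl h.symm
  · linear_combination (-(1 - ε * (1 - p))) * h

lemma E_condExp {n : ℕ} {p r : ℝ} (hr : r ≠ 0) (f : (Fin n → Bool) → ℝ) :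
    E r (condExp p r f) = E p f := by
  unfold E
  simp_rw [condExp_eq_sum_thin, Finset.mul_sum]
  rw [Finset.sum_comm]
  refine Finset.sum_congr rfl fun a _ => ?_
  rw [← sum_w_thin hr a, Finset.sum_mul]
  exact Finset.sum_congr rfl fun ψ _ => by ring

lemma E_condExp_sq {n : ℕ} {p r ε : ℝ} (hr : r ≠ 0) (h : p = r * (1 - ε * (1 - p)))
    (f : (Fin n → Bool) → ℝ) :
    E r (fun ψ => condExp p r f ψ ^ 2) = E2 p ε (fun a b => f a * f b) := by
  unfold E E2
  simp_rw [condExp_eq_sum_thin, sq, Finset.sum_mul_sum, Finset.mul_sum]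
  rw [Finset.sum_comm]
  refine Finset.sum_congr rfl fun a _ => ?_
  rw [Finset.sum_comm]
  refine Finset.sum_congr rfl fun b _ => ?_
  rw [← sum_w_thin_thin hr h a b, Finset.sum_mul]
  exact Finset.sum_congr rfl fun ψ _ => by ring

lemma Var_eq {n : ℕ} (r : ℝ) (g : (Fin n → Bool) → ℝ) :
    Var r g = E r (fun ψ => g ψ ^ 2) - E r g ^ 2 := by
  have key : ∀ c : ℝ, E r (fun ψ => (g ψ - c) ^ 2)
      = E r (fun ψ => g ψ ^ 2) - 2 * c * E r g + c ^ 2 * ∑ ω : Fin n → Bool, w r ω := by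
    intro c
    unfold E
    rw [Finset.mul_sum, Finset.mul_sum, ← Finset.sum_sub_distrib, ← Finset.sum_add_distrib]
    exact Finset.sum_congr rfl fun ψ _ => by ring
  unfold Var
  rw [key, E_one]
  ring

/-- The variance of the partial observation is the noise covariance at the noise level `ε`
determined by `p / r = 1 - ε (1 - p)`. -/
lemma Var_condExp_eq_noiseCov {n : ℕ} {p r ε : ℝ} (hr : r ≠ 0)
    (h : p = r * (1 - ε * (1 - p))) (f : (Fin n → Bool) → ℝ) :
    Var r (condExp p r f) = noiseCov p ε f := by
  rw [Var_eq, E_condExp hr, E_condExp_sq hr h, noiseCov]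

/-- `(f_n)` is noise sensitive at intensity `p` iff for every
`r ∈ (p,1)`, `Var_r(E_{p/r}[f_n(ψ·ξ) | ψ]) → 0` as `n → ∞`. -/
theorem NS_iff_asymptotically_clueless (p : ℝ) (hp : p ∈ Set.Ioo (0 : ℝ) 1)
    (f : ∀ n, (Fin n → Bool) → ℝ)
    (hf : ∀ n ω, f n ω ∈ Set.Icc (0 : ℝ) 1) :
    NS p f ↔ ∀ r ∈ Set.Ioo p 1,
      Tendsto (fun n => Var r (condExp p r (f n))) atTop (nhds 0) := by
  obtain ⟨hp0, hp1⟩ := hp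
  have hp1' : 0 < 1 - p := sub_pos.2 hp1
  constructor
  · rintro h r ⟨hpr, hr1⟩
    have hr : 0 < r := hp0.trans hpr
    have he : p = r * (1 - (r - p) / (r * (1 - p)) * (1 - p)) := by
      field_simp
      ring
    simp_rw [Var_condExp_eq_noiseCov hr.ne' he]
    refine h _ ⟨div_pos (sub_pos.2 hpr) (mul_pos hr hp1'), ?_⟩
    rw [div_lt_one (mul_pos hr hp1')]
    nlinarith
  · rintro h ε ⟨he0, he1⟩
    have hd : 0 < 1 - ε * (1 - p) := by nlinarith
    have he : p = p / (1 - ε * (1 - p)) * (1 - ε * (1 - p)) := (div_mul_cancel₀ p hd.ne').symm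
    simp_rw [← Var_condExp_eq_noiseCov (div_pos hp0 hd).ne' he]
    refine h _ ⟨?_, ?_⟩
    · rw [lt_div_iff₀ hd]
      nlinarith [mul_pos hp0 (mul_pos he0 hp1')]
    · rw [div_lt_one hd]
      nlinarith

end PartialObs
end

section
/- Let 0 < p < r < 1 and let (f_n)_{n≥1} be a sequence of functions f_n : {0,1}^n → [0,1]. Then lim_{n→∞} Var_r(E_{p/r}[f_n(ψ·ξ) | ψ]) = 0 if and only if for every k ∈ ℕ, lim_{n→∞} Σ_{S ⊆ {1,…,n}, 0 < |S| ≤ k} f̂_n^p(S)² = 0. -/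
/-!
Write `g ψ = E_{p/r}[f (ψ·ξ) | ψ]`. The operator `f ↦ g` is diagonal in the Fourier bases at `p`
and `r`: given `ω = ψ·ξ`, each `χ_i^r(ψ)` has conditional mean `c χ_i^p(ω)` with
`c = √((1-r)/r) √(p/(1-p)) ∈ (0,1)`, so `ĝ^r(S) = c^|S| f̂^p(S)` (`fourier_condExp`). By Parseval
(`parseval`), `Var_r g = ∑_{S ≠ ∅} c^(2|S|) f̂^p(S)²` (`var_condExp`).

Since `∑_S f̂^p(S)² = E_p[f²] ≤ 1`, this weighted sum is comparable to the low-level mass: for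
`L_k = ∑_{0 < |S| ≤ k} f̂^p(S)²` one has `c^(2k) L_k ≤ Var_r g ≤ L_k + c^(2k)`
(`low_le_var`, `var_le_low`). Both implications follow, the second by letting `k → ∞`.
-/

open Finset Filter

namespace PartialObs

/-- The character `χ_S^p(ω) = ∏_{i ∈ S} χ_i^p(ω)`, where `χ_i^p(ω) = -√((1-p)/p)`
if `ω_i = 1` and `√(p/(1-p))` if `ω_i = 0`. -/
noncomputable def chi {n : ℕ} (p : ℝ) (S : Finset (Fin n)) (ω : Fin n → Bool) : ℝ :=
  ∏ i ∈ S, if ω i then -Real.sqrt ((1 - p) / p) else Real.sqrt (p / (1 - p))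

/-- The Fourier coefficient `f̂^p(S) = E_p[f · χ_S^p]`. -/
noncomputable def fourier {n : ℕ} (p : ℝ) (f : (Fin n → Bool) → ℝ)
    (S : Finset (Fin n)) : ℝ :=
  E p (fun ω => f ω * chi p S ω)

/-- Sums over configurations of products of one-coordinate functions factorize. -/
lemma sum_prod_cfg {n : ℕ} (F : Fin n → Bool → ℝ) :
    ∑ ω : Fin n → Bool, ∏ i, F i (ω i) = ∏ i, (F i true + F i false) := by
  have h := Finset.prod_univ_sum (fun _ : Fin n => (Finset.univ : Finset Bool)) F
  rw [Fintype.piFinset_univ] at h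
  rw [← h]
  exact Finset.prod_congr rfl fun i _ => by simp

lemma E_const {n : ℕ} (p a : ℝ) : E (n := n) p (fun _ => a) = a := by
  unfold E w
  rw [← Finset.sum_mul, sum_prod_cfg (fun _ b => if b then p else 1 - p)]
  simp

lemma E_add {n : ℕ} (p : ℝ) (f g : (Fin n → Bool) → ℝ) :
    E p (fun ω => f ω + g ω) = E p f + E p g := by
  simp only [E, mul_add, Finset.sum_add_distrib]

lemma E_const_mul {n : ℕ} (p a : ℝ) (f : (Fin n → Bool) → ℝ) :
    E p (fun ω => a * f ω) = a * E p f := by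
  simp only [E, Finset.mul_sum]
  exact Finset.sum_congr rfl fun ω _ => by ring

lemma w_nonneg {n : ℕ} {p : ℝ} (hp : 0 < p) (hp1 : p < 1) (ω : Fin n → Bool) :
    0 ≤ w p ω := by
  refine Finset.prod_nonneg fun i _ => ?_
  split_ifs <;> linarith

lemma E_mono {n : ℕ} {p : ℝ} (hp : 0 < p) (hp1 : p < 1) {f g : (Fin n → Bool) → ℝ}
    (h : ∀ ω, f ω ≤ g ω) : E p f ≤ E p g :=
  Finset.sum_le_sum fun ω _ => mul_le_mul_of_nonneg_left (h ω) (w_nonneg hp hp1 ω)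

lemma var_eq {n : ℕ} (p : ℝ) (f : (Fin n → Bool) → ℝ) :
    Var p f = E p (fun ω => f ω ^ 2) - E p f ^ 2 := by
  have h : (fun ω => (f ω - E p f) ^ 2)
      = fun ω => (f ω ^ 2 + (-2 * E p f) * f ω) + E p f ^ 2 := by
    funext ω; ring
  rw [Var, h, E_add, E_add, E_const_mul, E_const]
  ring

/-- The dual orthogonality relation of the characters: the reproducing kernel
`∑_S χ_S(ω) χ_S(η)` is `1/ℙ_p(η)` on the diagonal and `0` off it. -/
lemma kernel_chi {n : ℕ} {p : ℝ} (hp : 0 < p) (hp1 : p < 1) (ω η : Fin n → Bool) :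
    w p η * ∑ S : Finset (Fin n), chi p S ω * chi p S η = if ω = η then 1 else 0 := by
  have hq : 0 < 1 - p := by linarith
  have hs1 : √((1 - p) / p) * √((1 - p) / p) = (1 - p) / p := Real.mul_self_sqrt (by positivity)
  have hs2 : √(p / (1 - p)) * √(p / (1 - p)) = p / (1 - p) := Real.mul_self_sqrt (by positivity)
  have hs3 : √((1 - p) / p) * √(p / (1 - p)) = 1 := by
    rw [← Real.sqrt_mul (by positivity)]
    have : (1 - p) / p * (p / (1 - p)) = 1 := by field_simp
    rw [this, Real.sqrt_one]
  have h1 : ∑ S : Finset (Fin n), chi p S ω * chi p S η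
      = ∏ i, (1 + (if ω i then -√((1 - p) / p) else √(p / (1 - p)))
          * (if η i then -√((1 - p) / p) else √(p / (1 - p)))) := by
    rw [Finset.prod_one_add]
    simp only [Finset.powerset_univ, chi, Finset.prod_mul_distrib]
  have h2 : ∀ a b : Bool, (if b then p else 1 - p)
      * (1 + (if a then -√((1 - p) / p) else √(p / (1 - p)))
          * (if b then -√((1 - p) / p) else √(p / (1 - p)))) = if a = b then 1 else 0 := by
    rintro (_ | _) (_ | _)
    · simp only [Bool.false_eq_true, if_false, if_true, hs2]; field_simp; ring
    · simp only [Bool.false_eq_true, if_false, if_true]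
      linear_combination (-p) * hs3
    · simp only [Bool.false_eq_true, if_false, if_true, reduceCtorEq]
      linear_combination (-(1 - p)) * hs3
    · simp only [if_true, neg_mul_neg, hs1]; field_simp; ring
  rw [h1, w, ← Finset.prod_mul_distrib]
  simp only [h2]
  split_ifs with h
  · subst h; simp
  · obtain ⟨i, hi⟩ := Function.ne_iff.mp h
    exact Finset.prod_eq_zero (Finset.mem_univ i) (if_neg hi)

lemma parseval {n : ℕ} {p : ℝ} (hp : 0 < p) (hp1 : p < 1) (f : (Fin n → Bool) → ℝ) :
    ∑ S : Finset (Fin n), fourier p f S ^ 2 = E p (fun ω => f ω ^ 2) := by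
  calc ∑ S : Finset (Fin n), fourier p f S ^ 2
      = ∑ S : Finset (Fin n), ∑ ω, ∑ η,
          w p ω * f ω * f η * (w p η * (chi p S ω * chi p S η)) := by
        refine Finset.sum_congr rfl fun S _ => ?_
        rw [fourier, E, sq, Finset.sum_mul_sum]
        exact Finset.sum_congr rfl fun ω _ => Finset.sum_congr rfl fun η _ => by ring
    _ = ∑ ω, ∑ η, w p ω * f ω * f η *
          (w p η * ∑ S : Finset (Fin n), chi p S ω * chi p S η) := by
        rw [Finset.sum_comm]
        refine Finset.sum_congr rfl fun ω _ => ?_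
        rw [Finset.sum_comm]
        refine Finset.sum_congr rfl fun η _ => ?_
        simp only [Finset.mul_sum]
    _ = E p (fun ω => f ω ^ 2) := by
        simp only [kernel_chi hp hp1, E]
        refine Finset.sum_congr rfl fun ω _ => ?_
        simp only [mul_ite, mul_one, mul_zero, Finset.sum_ite_eq, Finset.mem_univ, if_true]
        ring

lemma fourier_empty {n : ℕ} (p : ℝ) (f : (Fin n → Bool) → ℝ) : fourier p f ∅ = E p f := by
  simp [fourier, chi]

/-- The eigenvalue by which averaging over `ξ` multiplies each character of a single coordinate. -/
noncomputable def damp (p r : ℝ) : ℝ := √((1 - r) / r) * √(p / (1 - p))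

lemma damp_pos {p r : ℝ} (hp : 0 < p) (hpr : p < r) (hr : r < 1) : 0 < damp p r := by
  have h1 : 0 < 1 - r := by linarith
  have h2 : 0 < 1 - p := by linarith
  have h3 : 0 < r := by linarith
  unfold damp
  positivity

lemma damp_lt_one {p r : ℝ} (hp : 0 < p) (hpr : p < r) (hr : r < 1) : damp p r < 1 := by
  have h2 : 0 < 1 - p := by linarith
  have h3 : 0 < r := by linarith
  have h1 : 0 < 1 - r := by linarith
  rw [damp, ← Real.sqrt_mul (by positivity), Real.sqrt_lt' one_pos, div_mul_div_comm,
    div_lt_iff₀ (by positivity)]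
  nlinarith

/-- Joint law of `(ψ, ψ·ξ)` tested against a character of `ψ`: integrating `χ_S^r(ψ)` over the
event `ψ·ξ = ω` gives `ℙ_p(ω) c^|S| χ_S^p(ω)`. -/
lemma sum_fiber {n : ℕ} {p r : ℝ} (hp : 0 < p) (hpr : p < r) (hr : r < 1)
    (S : Finset (Fin n)) (ω : Fin n → Bool) :
    ∑ ψ : Fin n → Bool, ∑ ξ : Fin n → Bool,
      w r ψ * w (p / r) ξ * chi r S ψ * (if prodCfg ψ ξ = ω then 1 else 0)
      = w p ω * (damp p r ^ S.card * chi p S ω) := by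
  have hr0 : 0 < r := by linarith
  have h1r : 0 < 1 - r := by linarith
  have h1p : 0 < 1 - p := by linarith
  set X : Bool → ℝ := fun a => if a then -√((1 - r) / r) else √(r / (1 - r)) with hX
  set Y : Bool → ℝ := fun a => if a then -√((1 - p) / p) else √(p / (1 - p)) with hY
  have hchi : ∀ (T : Bool → ℝ) (η : Fin n → Bool), ∏ i ∈ S, T (η i)
      = ∏ i, if i ∈ S then T (η i) else 1 := by
    intro T η
    rw [Finset.prod_ite_mem, Finset.univ_inter]
  have hdel : ∀ ψ ξ : Fin n → Bool, (if prodCfg ψ ξ = ω then (1 : ℝ) else 0)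
      = ∏ i, if (ψ i && ξ i) = ω i then 1 else 0 := by
    intro ψ ξ
    split_ifs with h
    · subst h; simp [prodCfg]
    · obtain ⟨i, hi⟩ := Function.ne_iff.mp h
      exact (Finset.prod_eq_zero (Finset.mem_univ i) (if_neg hi)).symm
  let G : Fin n → Bool → Bool → ℝ := fun i a b =>
    (if a then r else 1 - r) * (if b then p / r else 1 - p / r) * (if i ∈ S then X a else 1)
      * (if (a && b) = ω i then 1 else 0)
  have hG : ∀ ψ ξ : Fin n → Bool,
      w r ψ * w (p / r) ξ * chi r S ψ * (if prodCfg ψ ξ = ω then 1 else 0)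
        = ∏ i, G i (ψ i) (ξ i) := by
    intro ψ ξ
    have : chi r S ψ = ∏ i, if i ∈ S then X (ψ i) else 1 := hchi X ψ
    rw [hdel, this, w, w]
    simp only [G, Finset.prod_mul_distrib]
  have hR : w p ω * (damp p r ^ S.card * chi p S ω)
      = ∏ i, (if ω i then p else 1 - p) * (if i ∈ S then damp p r * Y (ω i) else 1) := by
    rw [Finset.prod_mul_distrib, ← hchi (fun a => damp p r * Y a), Finset.prod_mul_distrib,
      Finset.prod_const]
    rfl
  simp only [hG, hR]
  have hin : ∀ ψ : Fin n → Bool, ∑ ξ : Fin n → Bool, ∏ i, G i (ψ i) (ξ i)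
      = ∏ i, (G i (ψ i) true + G i (ψ i) false) := fun ψ => sum_prod_cfg fun i b => G i (ψ i) b
  simp only [hin]
  rw [sum_prod_cfg fun i a => G i a true + G i a false]
  refine Finset.prod_congr rfl fun i _ => ?_
  have hs1 : √(p / (1 - p)) * √((1 - p) / p) = 1 := by
    rw [← Real.sqrt_mul (by positivity)]
    have : p / (1 - p) * ((1 - p) / p) = 1 := by field_simp
    rw [this, Real.sqrt_one]
  have hs2 : √(p / (1 - p)) * √(p / (1 - p)) = p / (1 - p) := Real.mul_self_sqrt (by positivity)
  -- `χ^r` has mean zero, which expresses its value at `0` through its value at `1`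
  have hs3 : (1 - r) * √(r / (1 - r)) = r * √((1 - r) / r) := by
    have ha : √(r / (1 - r)) * √((1 - r) / r) = 1 := by
      rw [← Real.sqrt_mul (by positivity)]
      have : r / (1 - r) * ((1 - r) / r) = 1 := by field_simp
      rw [this, Real.sqrt_one]
    have hb : √((1 - r) / r) * √((1 - r) / r) = (1 - r) / r := Real.mul_self_sqrt (by positivity)
    have hc : r * (√((1 - r) / r) * √((1 - r) / r)) = 1 - r := by rw [hb]; field_simp
    linear_combination (-√(r / (1 - r))) * hc + r * √((1 - r) / r) * ha
  have hpr' : r * (p / r) = p := by field_simp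
  have hs2' : (1 - p) * (√(p / (1 - p)) * √(p / (1 - p))) = p := by rw [hs2]; field_simp
  by_cases hi : i ∈ S <;> cases ho : ω i <;>
    simp [G, hX, hY, hi, ho, damp]
  · linear_combination hs3 + √((1 - r) / r) * hpr' - √((1 - r) / r) * hs2'
  · linear_combination √((1 - r) / r) * hpr' - p * √((1 - r) / r) * hs1
  · linear_combination (-1 : ℝ) * hpr'
  · linear_combination hpr'

lemma fourier_condExp {n : ℕ} {p r : ℝ} (hp : 0 < p) (hpr : p < r) (hr : r < 1)
    (f : (Fin n → Bool) → ℝ) (S : Finset (Fin n)) :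
    fourier r (condExp p r f) S = damp p r ^ S.card * fourier p f S := by
  calc fourier r (condExp p r f) S
      = ∑ ψ : Fin n → Bool, ∑ ξ : Fin n → Bool, ∑ ω : Fin n → Bool, f ω *
          (w r ψ * w (p / r) ξ * chi r S ψ * (if prodCfg ψ ξ = ω then 1 else 0)) := by
        simp only [fourier, condExp, E, Finset.mul_sum, Finset.sum_mul]
        refine Finset.sum_congr rfl fun ψ _ => Finset.sum_congr rfl fun ξ _ => ?_
        simp only [mul_ite, mul_one, mul_zero, Finset.sum_ite_eq, Finset.mem_univ, if_true]
        ring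
    _ = ∑ ω : Fin n → Bool, f ω * ∑ ψ : Fin n → Bool, ∑ ξ : Fin n → Bool,
          w r ψ * w (p / r) ξ * chi r S ψ * (if prodCfg ψ ξ = ω then 1 else 0) := by
        simp only [Finset.mul_sum]
        rw [Finset.sum_comm]
        rw [Finset.sum_congr rfl fun ξ _ => Finset.sum_comm]
        rw [Finset.sum_comm]
        exact Finset.sum_congr rfl fun ω _ => Finset.sum_comm
    _ = damp p r ^ S.card * fourier p f S := by
        simp only [sum_fiber hp hpr hr, fourier, E, Finset.mul_sum]
        exact Finset.sum_congr rfl fun ω _ => by ring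

lemma var_condExp {n : ℕ} {p r : ℝ} (hp : 0 < p) (hpr : p < r) (hr : r < 1)
    (f : (Fin n → Bool) → ℝ) :
    Var r (condExp p r f) = ∑ S ∈ Finset.univ.filter (fun S : Finset (Fin n) => S ≠ ∅),
      (damp p r ^ 2) ^ S.card * fourier p f S ^ 2 := by
  rw [var_eq, ← parseval (hp.trans hpr) hr, ← fourier_empty, sub_eq_iff_eq_add,
    Finset.filter_ne', ← Finset.sum_erase_add _ _ (Finset.mem_univ (∅ : Finset (Fin n)))]
  refine congrArg₂ _ (Finset.sum_congr rfl fun S _ => ?_) rfl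
  rw [fourier_condExp hp hpr hr]
  ring

lemma low_le_var {n : ℕ} {p r : ℝ} (hp : 0 < p) (hpr : p < r) (hr : r < 1)
    (f : (Fin n → Bool) → ℝ) (k : ℕ) :
    (damp p r ^ 2) ^ k *
      ∑ S ∈ Finset.univ.filter (fun S : Finset (Fin n) => S ≠ ∅ ∧ S.card ≤ k), fourier p f S ^ 2
      ≤ Var r (condExp p r f) := by
  have h0 := damp_pos hp hpr hr
  have h1 : damp p r ^ 2 ≤ 1 := pow_le_one₀ h0.le (damp_lt_one hp hpr hr).le
  rw [var_condExp hp hpr hr, Finset.mul_sum]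
  refine (Finset.sum_le_sum fun S hS => ?_).trans
    (Finset.sum_le_sum_of_subset_of_nonneg
      (Finset.monotone_filter_right _ fun S _ hS => hS.1) fun S _ _ => by positivity)
  exact mul_le_mul_of_nonneg_right
    (pow_le_pow_of_le_one (by positivity) h1 (Finset.mem_filter.mp hS).2.2) (sq_nonneg _)

lemma var_le_low {n : ℕ} {p r : ℝ} (hp : 0 < p) (hpr : p < r) (hr : r < 1)
    (f : (Fin n → Bool) → ℝ) (hf : ∀ ω, f ω ∈ Set.Icc (0 : ℝ) 1) (k : ℕ) :
    Var r (condExp p r f) ≤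
      ∑ S ∈ Finset.univ.filter (fun S : Finset (Fin n) => S ≠ ∅ ∧ S.card ≤ k), fourier p f S ^ 2
      + (damp p r ^ 2) ^ k := by
  have h0 := damp_pos hp hpr hr
  have h1 : damp p r ^ 2 ≤ 1 := pow_le_one₀ h0.le (damp_lt_one hp hpr hr).le
  have hp1 : p < 1 := hpr.trans hr
  have hmass : ∑ S : Finset (Fin n), fourier p f S ^ 2 ≤ 1 := by
    rw [parseval hp hp1]
    calc E p (fun ω => f ω ^ 2) ≤ E (n := n) p (fun _ => 1) :=
          E_mono hp hp1 fun ω => pow_le_one₀ (hf ω).1 (hf ω).2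
      _ = 1 := E_const p 1
  rw [var_condExp hp hpr hr,
    ← Finset.sum_filter_add_sum_filter_not _ (fun S : Finset (Fin n) => S.card ≤ k)]
  simp only [Finset.filter_filter]
  refine add_le_add (Finset.sum_le_sum fun S _ => ?_) ?_
  · exact mul_le_of_le_one_left (sq_nonneg _) (pow_le_one₀ (by positivity) h1)
  · calc _ ≤ ∑ S ∈ Finset.univ.filter (fun S : Finset (Fin n) => S ≠ ∅ ∧ ¬ S.card ≤ k),
          (damp p r ^ 2) ^ k * fourier p f S ^ 2 := by
          refine Finset.sum_le_sum fun S hS => mul_le_mul_of_nonneg_right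
            (pow_le_pow_of_le_one (by positivity) h1 ?_) (sq_nonneg _)
          exact (not_le.mp (Finset.mem_filter.mp hS).2.2).le
      _ ≤ ∑ S : Finset (Fin n), (damp p r ^ 2) ^ k * fourier p f S ^ 2 :=
          Finset.sum_le_sum_of_subset_of_nonneg (Finset.filter_subset _ _)
            fun S _ _ => by positivity
      _ ≤ (damp p r ^ 2) ^ k := by
          rw [← Finset.mul_sum]
          exact mul_le_of_le_one_right (by positivity) hmass

/-- `Var_r(E_{p/r}[f_n(ψ·ξ) | ψ]) → 0` iff for every `k`, the
Fourier mass of `f_n` on non-empty sets of size at most `k` tends to `0`. -/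
theorem clueless_iff_low_level_fourier_vanishes (p r : ℝ)
    (hp : 0 < p) (hpr : p < r) (hr : r < 1)
    (f : ∀ n, (Fin n → Bool) → ℝ)
    (hf : ∀ n ω, f n ω ∈ Set.Icc (0 : ℝ) 1) :
    Tendsto (fun n => Var r (condExp p r (f n))) atTop (nhds 0) ↔
      ∀ k : ℕ,
        Tendsto (fun n =>
          ∑ S ∈ Finset.univ.filter (fun S : Finset (Fin n) => S ≠ ∅ ∧ S.card ≤ k),
            fourier p (f n) S ^ 2) atTop (nhds 0) := by
  have h0 := damp_pos hp hpr hr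
  have h1 : damp p r ^ 2 < 1 := pow_lt_one₀ h0.le (damp_lt_one hp hpr hr) two_ne_zero
  constructor
  · intro h k
    have hk : 0 < (damp p r ^ 2) ^ k := by positivity
    refine squeeze_zero (fun n => Finset.sum_nonneg fun S _ => sq_nonneg _)
      (fun n => ?_) (by simpa using h.div_const ((damp p r ^ 2) ^ k))
    rw [le_div_iff₀ hk, mul_comm]
    exact low_le_var hp hpr hr (f n) k
  · intro h
    have hnn : ∀ n, 0 ≤ Var r (condExp p r (f n)) := fun n => by
      rw [var_condExp hp hpr hr]
      positivity
    rw [Metric.tendsto_atTop]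
    intro ε hε
    obtain ⟨k, hk⟩ := exists_pow_lt_of_lt_one (half_pos hε) h1
    obtain ⟨N, hN⟩ := Filter.eventually_atTop.mp ((h k).eventually_lt_const (half_pos hε))
    refine ⟨N, fun n hn => ?_⟩
    rw [Real.dist_eq, sub_zero, abs_of_nonneg (hnn n)]
    linarith [var_le_low hp hpr hr (f n) (hf n) k, hN n hn]

end PartialObs
end
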